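/- Let u ∈ C_c^∞((0,∞)). Then lim_{|t|→∞} ∫₀^∞ | ∫₀^∞ exp(−kx − i k⁴ t) u(k) dk |² dx = 0. -/

import Mathlib

open Complex MeasureTheory Filter

/-!
Write the inner integral as an oscillatory integral with phase `φ(k) = k ^ 4` and amplitude
`e^{-kx} u(k)`. Since `φ' ≠ 0` on the half-line, `y = φ(k)` is a valid change of variables, so for
each fixed `x` the inner integral is a Fourier transform in `t` and tends to zero by the
Riemann-Lebesgue lemma. Uniformly in `t` it is at most the Laplace transform of `|u|` at `x`, and
the Laplace transform is bounded on `L²(ℝ₊)` by Schur's test with weights `k^{-1/2}` and `x^{-1/2}`.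
Dominated convergence in `x` concludes, for every `u ∈ L²(ℝ₊)`.
-/

open Set
open scoped ENNReal Topology

theorem injOn_of_hasDerivAt_ne_zero {s : Set ℝ} [OrdConnected s] {φ φ' : ℝ → ℝ}
    (hφ : ∀ k ∈ s, HasDerivAt φ (φ' k) k) (hφ' : ∀ k ∈ s, φ' k ≠ 0) : InjOn φ s := by
  intro a ha b hb heq
  by_contra hne
  wlog hab : a < b generalizing a b
  · exact this hb ha heq.symm (Ne.symm hne) (lt_of_le_of_ne (not_lt.mp hab) (Ne.symm hne))
  have hsub : Icc a b ⊆ s := s.Icc_subset ha hb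
  obtain ⟨c, hc, hzero⟩ := exists_hasDerivAt_eq_zero hab
    (fun k hk => (hφ k (hsub hk)).continuousAt.continuousWithinAt) heq
    (fun k hk => hφ k (hsub (Ioo_subset_Icc_self hk)))
  exact hφ' c (hsub (Ioo_subset_Icc_self hc)) hzero

section RiemannLebesgue

variable {E : Type*} [NormedAddCommGroup E] [NormedSpace ℂ E]

theorem tendsto_integral_exp_mul_smul_cocompact (f : ℝ → E) :
    Tendsto (fun t : ℝ => ∫ y : ℝ, cexp (-(I * y * t)) • f y) (cocompact ℝ) (𝓝 0) := by
  have hscale : Tendsto (fun t : ℝ => t * (2 * Real.pi)⁻¹) (cocompact ℝ) (cocompact ℝ) :=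
    (Homeomorph.mulRight₀ (2 * Real.pi)⁻¹
      (inv_ne_zero Real.two_pi_pos.ne')).isClosedEmbedding.tendsto_cocompact
  refine ((Real.tendsto_integral_exp_smul_cocompact f).comp hscale).congr fun t => ?_
  refine integral_congr_ae (Eventually.of_forall fun y => ?_)
  have hphase : 2 * Real.pi * -(y * (t * (2 * Real.pi)⁻¹)) = -(y * t) := by field_simp
  simp only [Circle.smul_def, Real.fourierChar_apply, hphase]
  congr 2
  push_cast
  ring

variable {s : Set ℝ} {φ φ' : ℝ → ℝ}

theorem tendsto_setIntegral_exp_phase_smul_cocompact (hs : MeasurableSet s)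
    (hφ : ∀ k ∈ s, HasDerivWithinAt φ (φ' k) s k) (hφ' : ∀ k ∈ s, φ' k ≠ 0) (hinj : InjOn φ s)
    (f : ℝ → E) :
    Tendsto (fun t : ℝ => ∫ k in s, cexp (-(I * φ k * t)) • f k) (cocompact ℝ) (𝓝 0) := by
  let ψ := Function.invFunOn φ s
  have hψ : ∀ k ∈ s, ψ (φ k) = k := fun k hk => hinj.leftInvOn_invFunOn hk
  refine (tendsto_integral_exp_mul_smul_cocompact
    ((φ '' s).indicator fun y => |φ' (ψ y)|⁻¹ • f (ψ y))).congr fun t => ?_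
  have himage : MeasurableSet (φ '' s) := hs.image_of_continuousOn_injOn
    (fun k hk => (hφ k hk).continuousWithinAt) hinj
  calc ∫ y : ℝ, cexp (-(I * y * t)) • (φ '' s).indicator (fun y => |φ' (ψ y)|⁻¹ • f (ψ y)) y
      = ∫ y in φ '' s, cexp (-(I * y * t)) • |φ' (ψ y)|⁻¹ • f (ψ y) := by
        rw [← integral_indicator himage]
        simp_rw [indicator_smul_apply]
    _ = ∫ k in s, |φ' k| • cexp (-(I * φ k * t)) • |φ' (ψ (φ k))|⁻¹ • f (ψ (φ k)) :=
        integral_image_eq_integral_abs_deriv_smul hs hφ hinj _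
    _ = ∫ k in s, cexp (-(I * φ k * t)) • f k := by
        refine setIntegral_congr_fun hs fun k hk => ?_
        simp only [hψ k hk]
        rw [smul_comm, smul_inv_smul₀ (abs_ne_zero.mpr (hφ' k hk))]

end RiemannLebesgue

section DominatedConvergence

variable {X E : Type*} [MeasurableSpace X] [NormedAddCommGroup E] [NormedSpace ℂ E]
  {μ : Measure X} {s : Set ℝ} {φ φ' : ℝ → ℝ}

theorem tendsto_integral_norm_setIntegral_exp_phase_smul_pow (hs : MeasurableSet s)
    (hφ : ∀ k ∈ s, HasDerivWithinAt φ (φ' k) s k) (hφ' : ∀ k ∈ s, φ' k ≠ 0) (hinj : InjOn φ s)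
    {f : X → ℝ → E} {n : ℕ} (hn : n ≠ 0)
    (hf : AEStronglyMeasurable (Function.uncurry f) (μ.prod (volume.restrict s)))
    (hdom : Integrable (fun x => (∫ k in s, ‖f x k‖) ^ n) μ) :
    Tendsto (fun t : ℝ => ∫ x, ‖∫ k in s, cexp (-(I * φ k * t)) • f x k‖ ^ n ∂μ)
      (cocompact ℝ) (𝓝 0) := by
  have hφm : AEMeasurable φ (volume.restrict s) :=
    ContinuousOn.aemeasurable (fun k hk => (hφ k hk).continuousWithinAt) hs
  have : (cocompact ℝ).IsCountablyGenerated := by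
    rw [cocompact_eq_atBot_atTop]
    infer_instance
  rw [← integral_zero X ℝ (μ := μ)]
  refine tendsto_integral_filter_of_dominated_convergence _ ?_ ?_ hdom ?_
  · refine Eventually.of_forall fun t => AEStronglyMeasurable.pow ?_ n
    have hexp : AEMeasurable (fun k => cexp (-(I * φ k * t))) (volume.restrict s) := by fun_prop
    exact (hexp.comp_snd.aestronglyMeasurable.smul hf).integral_prod_right'.norm
  · refine Eventually.of_forall fun t => Eventually.of_forall fun x => ?_
    rw [norm_pow, norm_norm]
    gcongr
    refine (norm_integral_le_integral_norm _).trans_eq ?_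
    simp [norm_smul, Complex.norm_exp]
  · refine Eventually.of_forall fun x => ?_
    simpa [hn] using
      (tendsto_setIntegral_exp_phase_smul_cocompact hs hφ hφ' hinj (f x)).norm.pow n

end DominatedConvergence

section Schur

variable {X Y : Type*} [MeasurableSpace X] [MeasurableSpace Y] {μ : Measure X} {ν : Measure Y}

theorem sq_lintegral_mul_le_of_weight {K p f : Y → ℝ≥0∞} (hK : AEMeasurable K ν)
    (hp : AEMeasurable p ν) (hp0 : ∀ᵐ y ∂ν, p y ≠ 0) (hp_top : ∀ᵐ y ∂ν, p y ≠ ∞)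
    (hf : AEMeasurable f ν) :
    (∫⁻ y, K y * f y ∂ν) ^ 2
      ≤ (∫⁻ y, K y * p y ∂ν) * ∫⁻ y, K y * (f y ^ 2 * (p y)⁻¹) ∂ν := by
  have hsplit : ∀ᵐ y ∂ν, K y * f y
      = (K y * p y) ^ (1 / 2 : ℝ) * (K y * (f y ^ 2 * (p y)⁻¹)) ^ (1 / 2 : ℝ) := by
    filter_upwards [hp0, hp_top] with y h0 htop
    rw [← ENNReal.mul_rpow_of_nonneg _ _ (by norm_num : (0 : ℝ) ≤ 1 / 2)]
    have hsq : K y * p y * (K y * (f y ^ 2 * (p y)⁻¹)) = (K y * f y) ^ 2 := by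
      calc K y * p y * (K y * (f y ^ 2 * (p y)⁻¹))
          = (K y * f y) ^ 2 * (p y * (p y)⁻¹) := by ring
        _ = (K y * f y) ^ 2 := by rw [ENNReal.mul_inv_cancel h0 htop, mul_one]
    rw [hsq, ← ENNReal.rpow_natCast_mul]
    norm_num
  calc (∫⁻ y, K y * f y ∂ν) ^ 2
      ≤ ((∫⁻ y, K y * p y ∂ν) ^ (1 / 2 : ℝ)
          * (∫⁻ y, K y * (f y ^ 2 * (p y)⁻¹) ∂ν) ^ (1 / 2 : ℝ)) ^ 2 := by
        rw [lintegral_congr_ae hsplit]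
        gcongr
        exact ENNReal.lintegral_mul_norm_pow_le (by fun_prop) (by fun_prop) (by norm_num)
          (by norm_num) (by norm_num)
    _ = (∫⁻ y, K y * p y ∂ν) * ∫⁻ y, K y * (f y ^ 2 * (p y)⁻¹) ∂ν := by
        rw [mul_pow, ← ENNReal.rpow_mul_natCast, ← ENNReal.rpow_mul_natCast]
        norm_num

theorem lintegral_sq_lintegral_mul_le_of_schur [SFinite μ] [SFinite ν] {K : X → Y → ℝ≥0∞}
    {p : Y → ℝ≥0∞} {q : X → ℝ≥0∞} {A B : ℝ≥0∞} (hK : Measurable (Function.uncurry K))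
    (hp : AEMeasurable p ν) (hp0 : ∀ᵐ y ∂ν, p y ≠ 0) (hp_top : ∀ᵐ y ∂ν, p y ≠ ∞)
    (hq : AEMeasurable q μ) (hA : ∀ᵐ x ∂μ, ∫⁻ y, K x y * p y ∂ν ≤ A * q x)
    (hB : ∀ᵐ y ∂ν, ∫⁻ x, K x y * q x ∂μ ≤ B * p y) {f : Y → ℝ≥0∞} (hf : AEMeasurable f ν) :
    ∫⁻ x, (∫⁻ y, K x y * f y ∂ν) ^ 2 ∂μ ≤ A * B * ∫⁻ y, f y ^ 2 ∂ν := by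
  have hg : AEMeasurable (fun y => f y ^ 2 * (p y)⁻¹) ν := by fun_prop
  have hKg : AEMeasurable (fun z : X × Y => K z.1 z.2 * (f z.2 ^ 2 * (p z.2)⁻¹)) (μ.prod ν) :=
    hK.aemeasurable.mul hg.comp_snd
  calc ∫⁻ x, (∫⁻ y, K x y * f y ∂ν) ^ 2 ∂μ
      ≤ ∫⁻ x, A * (q x * ∫⁻ y, K x y * (f y ^ 2 * (p y)⁻¹) ∂ν) ∂μ := by
        refine lintegral_mono_ae ?_
        filter_upwards [hA] with x hx
        have hKx : AEMeasurable (K x) ν := hK.of_uncurry_left.aemeasurable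
        rw [← mul_assoc]
        exact (sq_lintegral_mul_le_of_weight hKx hp hp0 hp_top hf).trans (by gcongr)
    _ = A * ∫⁻ x, ∫⁻ y, q x * (K x y * (f y ^ 2 * (p y)⁻¹)) ∂ν ∂μ := by
        rw [lintegral_const_mul'' A (f := fun x => q x * ∫⁻ y, K x y * (f y ^ 2 * (p y)⁻¹) ∂ν)
          (hq.mul hKg.lintegral_prod_right')]
        congr 1
        refine lintegral_congr fun x => (lintegral_const_mul'' _ ?_).symm
        exact hK.of_uncurry_left.aemeasurable.mul hg
    _ = A * ∫⁻ y, f y ^ 2 * (p y)⁻¹ * ∫⁻ x, K x y * q x ∂μ ∂ν := by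
        rw [lintegral_lintegral_swap (hq.comp_fst.mul hKg)]
        congr 1
        refine lintegral_congr fun y => ?_
        have hKy : AEMeasurable (fun x => K x y) μ := hK.of_uncurry_right.aemeasurable
        rw [← lintegral_const_mul'' (f := fun x => K x y * q x) _ (hKy.mul hq)]
        refine lintegral_congr fun x => ?_
        ring
    _ ≤ A * ∫⁻ y, B * f y ^ 2 ∂ν := by
        refine mul_le_mul_right (lintegral_mono_ae ?_) A
        filter_upwards [hB, hp0, hp_top] with y hy h0 htop
        calc f y ^ 2 * (p y)⁻¹ * ∫⁻ x, K x y * q x ∂μ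
            ≤ f y ^ 2 * (p y)⁻¹ * (B * p y) := by gcongr
          _ = B * f y ^ 2 * ((p y)⁻¹ * p y) := by ring
          _ = B * f y ^ 2 := by rw [ENNReal.inv_mul_cancel h0 htop, mul_one]
    _ = A * B * ∫⁻ y, f y ^ 2 ∂ν := by
        rw [lintegral_const_mul'' _ (hf.pow_const 2), mul_assoc]

end Schur

section Laplace

theorem lintegral_exp_neg_mul_rpow_Ioi {a r : ℝ} (ha : 0 < a) (hr : 0 < r) :
    ∫⁻ k in Ioi (0 : ℝ), ENNReal.ofReal (Real.exp (-(r * k))) * ENNReal.ofReal (k ^ (a - 1))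
      = ENNReal.ofReal (Real.Gamma a) * ENNReal.ofReal (r ^ (-a)) := by
  have hval := Real.integral_rpow_mul_exp_neg_mul_Ioi ha hr
  have hpos : 0 < (1 / r) ^ a * Real.Gamma a :=
    mul_pos (by positivity) (Real.Gamma_pos_of_pos ha)
  have hint : IntegrableOn (fun k : ℝ => k ^ (a - 1) * Real.exp (-(r * k))) (Ioi 0) :=
    Integrable.of_integral_ne_zero (hval.trans_ne hpos.ne')
  have hnonneg : ∀ᵐ k ∂volume.restrict (Ioi (0 : ℝ)), 0 ≤ k ^ (a - 1) * Real.exp (-(r * k)) := by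
    filter_upwards [ae_restrict_mem measurableSet_Ioi] with k hk
    exact mul_nonneg (Real.rpow_nonneg (le_of_lt hk) _) (Real.exp_pos _).le
  rw [← ENNReal.ofReal_mul (Real.Gamma_pos_of_pos ha).le, Real.rpow_neg hr.le,
    ← Real.inv_rpow hr.le, ← one_div, mul_comm, ← hval,
    ofReal_integral_eq_lintegral_ofReal hint hnonneg]
  refine lintegral_congr fun k => ?_
  rw [← ENNReal.ofReal_mul (Real.exp_pos _).le, mul_comm]

theorem lintegral_sq_lintegral_exp_neg_mul_le {f : ℝ → ℝ≥0∞}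
    (hf : AEMeasurable f (volume.restrict (Ioi 0))) :
    ∫⁻ x in Ioi (0 : ℝ), (∫⁻ k in Ioi (0 : ℝ), ENNReal.ofReal (Real.exp (-(k * x))) * f k) ^ 2
      ≤ ENNReal.ofReal Real.pi * ∫⁻ k in Ioi (0 : ℝ), f k ^ 2 := by
  have hmoment {r : ℝ} (hr : 0 < r) :
      ∫⁻ k in Ioi (0 : ℝ), ENNReal.ofReal (Real.exp (-(r * k))) * ENNReal.ofReal (k ^ (-1 / 2 : ℝ))
        = ENNReal.ofReal √Real.pi * ENNReal.ofReal (r ^ (-1 / 2 : ℝ)) := by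
    have h := lintegral_exp_neg_mul_rpow_Ioi one_half_pos hr
    rw [Real.Gamma_one_half_eq] at h
    norm_num at h ⊢
    exact h
  have hpi : ENNReal.ofReal √Real.pi * ENNReal.ofReal √Real.pi = ENNReal.ofReal Real.pi := by
    rw [← ENNReal.ofReal_mul (Real.sqrt_nonneg _), Real.mul_self_sqrt Real.pi_nonneg]
  rw [← hpi]
  refine lintegral_sq_lintegral_mul_le_of_schur (p := fun k => ENNReal.ofReal (k ^ (-1 / 2 : ℝ)))
    (q := fun x => ENNReal.ofReal (x ^ (-1 / 2 : ℝ))) (by unfold Function.uncurry; fun_prop)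
    (by fun_prop) ?_ (by simp) (by fun_prop) ?_ ?_ hf
  all_goals filter_upwards [ae_restrict_mem measurableSet_Ioi] with r hr
  · simpa using Real.rpow_pos_of_pos hr _
  · simpa only [mul_comm r] using (hmoment hr).le
  · exact (hmoment hr).le

variable {E : Type*} [NormedAddCommGroup E] [NormedSpace ℝ E]

/-- The Laplace transform of the restriction of `f` to the half-line, with the Bochner convention
that it is `0` wherever the integral diverges. -/
noncomputable def laplaceTransform (f : ℝ → E) (x : ℝ) : E :=
  ∫ k in Ioi (0 : ℝ), Real.exp (-(k * x)) • f k

theorem memLp_laplaceTransform {f : ℝ → E} (hf : MemLp f 2 (volume.restrict (Ioi 0))) :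
    MemLp (laplaceTransform f) 2 (volume.restrict (Ioi 0)) := by
  have hmeas : AEStronglyMeasurable (laplaceTransform f) (volume.restrict (Ioi 0)) := by
    have hexp : Continuous fun z : ℝ × ℝ => Real.exp (-(z.2 * z.1)) := by fun_prop
    exact (hexp.aestronglyMeasurable.smul hf.1.comp_snd).integral_prod_right'
  have hbound (x : ℝ) : ‖laplaceTransform f x‖ₑ
      ≤ ∫⁻ k in Ioi (0 : ℝ), ENNReal.ofReal (Real.exp (-(k * x))) * ‖f k‖ₑ := by
    refine (enorm_integral_le_lintegral_enorm _).trans_eq (lintegral_congr fun k => ?_)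
    rw [enorm_smul, Real.enorm_of_nonneg (Real.exp_pos _).le]
  have hfin : ∫⁻ k in Ioi (0 : ℝ), ‖f k‖ₑ ^ 2 < ∞ := by
    simpa using lintegral_rpow_enorm_lt_top_of_eLpNorm_lt_top two_ne_zero ENNReal.ofNat_ne_top hf.2
  refine ⟨hmeas, (eLpNorm_lt_top_iff_lintegral_rpow_enorm_lt_top two_ne_zero
    ENNReal.ofNat_ne_top).mpr ?_⟩
  calc ∫⁻ x in Ioi (0 : ℝ), ‖laplaceTransform f x‖ₑ ^ (2 : ℝ≥0∞).toReal
      ≤ ∫⁻ x in Ioi (0 : ℝ),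
          (∫⁻ k in Ioi (0 : ℝ), ENNReal.ofReal (Real.exp (-(k * x))) * ‖f k‖ₑ) ^ 2 := by
        simp only [ENNReal.toReal_ofNat, ENNReal.rpow_ofNat]
        gcongr with x
        exact hbound x
    _ ≤ ENNReal.ofReal Real.pi * ∫⁻ k in Ioi (0 : ℝ), ‖f k‖ₑ ^ 2 :=
        lintegral_sq_lintegral_exp_neg_mul_le hf.1.enorm
    _ < ∞ := ENNReal.mul_lt_top ENNReal.ofReal_lt_top hfin

end Laplace

theorem decaying_mode_dispersion_general {E : Type*} [NormedAddCommGroup E] [NormedSpace ℂ E]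
    [CompleteSpace E] {φ φ' : ℝ → ℝ} (hφ : ∀ k ∈ Ioi (0 : ℝ), HasDerivAt φ (φ' k) k)
    (hφ' : ∀ k ∈ Ioi (0 : ℝ), φ' k ≠ 0) {u : ℝ → E} (hu : MemLp u 2 (volume.restrict (Ioi 0))) :
    Tendsto (fun t : ℝ => ∫ x in Ioi (0 : ℝ),
        ‖∫ k in Ioi (0 : ℝ), cexp (-((k * x : ℝ) : ℂ) - I * φ k * t) • u k‖ ^ 2)
      (cocompact ℝ) (𝓝 0) := by
  let f (x k : ℝ) : E := cexp (-((k * x : ℝ) : ℂ)) • u k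
  have hf : AEStronglyMeasurable (Function.uncurry f)
      ((volume.restrict (Ioi 0)).prod (volume.restrict (Ioi 0))) := by
    have hexp : Continuous fun z : ℝ × ℝ => cexp (-((z.2 * z.1 : ℝ) : ℂ)) := by fun_prop
    exact hexp.aestronglyMeasurable.smul hu.1.comp_snd
  have hnorm (x : ℝ) :
      ∫ k in Ioi (0 : ℝ), ‖f x k‖ = laplaceTransform (fun k => ‖u k‖) x := by
    simp [f, laplaceTransform, norm_smul, Complex.norm_exp]
  have hdom : IntegrableOn (fun x => (∫ k in Ioi (0 : ℝ), ‖f x k‖) ^ 2) (Ioi 0) := by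
    simp_rw [hnorm]
    exact (memLp_laplaceTransform hu.norm).integrable_sq
  refine (tendsto_integral_norm_setIntegral_exp_phase_smul_pow measurableSet_Ioi
    (fun k hk => (hφ k hk).hasDerivWithinAt) hφ' (injOn_of_hasDerivAt_ne_zero hφ hφ')
    two_ne_zero hf hdom).congr fun t => ?_
  simp only [f, smul_smul, ← Complex.exp_add, neg_add_eq_sub]

/-- The contribution of the exponentially decaying mode `e^{-kx}` vanishes in
`L²(ℝ₊)` as `|t| → ∞`, for `u ∈ C_c^∞((0,∞))`. -/
theorem decaying_mode_dispersion (u : ℝ → ℂ) (hu : ContDiff ℝ (⊤ : ℕ∞) u)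
    (hsupp : HasCompactSupport u) (hpos : tsupport u ⊆ Set.Ioi (0 : ℝ)) :
    Tendsto (fun t : ℝ =>
        ∫ x in Set.Ioi (0 : ℝ),
          ‖∫ k in Set.Ioi (0 : ℝ),
              Complex.exp (-((k * x : ℝ) : ℂ) - I * (k : ℂ) ^ 4 * (t : ℂ)) * u k‖ ^ 2)
      atTop (nhds 0) ∧
    Tendsto (fun t : ℝ =>
        ∫ x in Set.Ioi (0 : ℝ),
          ‖∫ k in Set.Ioi (0 : ℝ),
              Complex.exp (-((k * x : ℝ) : ℂ) - I * (k : ℂ) ^ 4 * (t : ℂ)) * u k‖ ^ 2)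
      atBot (nhds 0) := by
  have h := decaying_mode_dispersion_general (fun k _ => hasDerivAt_pow 4 k)
    (fun k (hk : 0 < k) => by positivity)
    ((hu.continuous.memLp_of_hasCompactSupport hsupp).restrict _)
  simp only [ofReal_pow, smul_eq_mul] at h
  exact ⟨h.mono_left atTop_le_cocompact, h.mono_left atBot_le_cocompact⟩
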